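/- Let d ∈ (1/4, 1/2), t > 0, m ≥ 2, and for λ > 0 set G_λ(u,v) = e^{−λ|u−v|} |u−v|^{2d−1} ∫_0^∞ y^{d−1} (1+y)^{d−1} e^{−2λ|u−v| y} dy for u ≠ v. Then, with indices taken cyclically (s_{m+1} = s_1), lim_{λ → 0⁺} ∫_0^t ⋯ ∫_0^t ∏_{j=1}^m G_λ(s_j, s_{j+1}) ds_1 ⋯ ds_m = B(d, 1−2d)^m · ∫_0^t ⋯ ∫_0^t ∏_{j=1}^m |s_j − s_{j+1}|^{2d−1} ds_1 ⋯ ds_m, and the limit is finite. -/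

import Mathlib

open MeasureTheory Real Set

/-- `G_λ(u,v) = e^{−λ|u−v|} |u−v|^{2d−1} ∫_0^∞ y^{d−1}(1+y)^{d−1} e^{−2λ|u−v|y} dy`. -/
noncomputable def tempG (d lam u v : ℝ) : ℝ :=
  Real.exp (-lam * |u - v|) * |u - v| ^ (2 * d - 1) *
    ∫ y in Set.Ioi (0 : ℝ),
      y ^ (d - 1) * (1 + y) ^ (d - 1) * Real.exp (-2 * lam * |u - v| * y)

lemma lint_split {n : ℕ} (ν : Measure ℝ) [IsFiniteMeasure ν]
    (f : (Fin (n+1) → ℝ) → ENNReal) (hf : Measurable f) :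
    ∫⁻ s, f s ∂(Measure.pi fun _ => ν) =
      ∫⁻ x, ∫⁻ a, f (Fin.cons a x) ∂ν ∂(Measure.pi fun _ : Fin n => ν) := by
  have h := (measurePreserving_piFinSuccAbove (fun _ : Fin (n+1) => ν) 0).symm
  rw [← h.lintegral_comp hf, lintegral_prod_symm' (fun z => f ((MeasurableEquiv.piFinSuccAbove (fun _ => ℝ) 0).symm z))
    (hf.comp (MeasurableEquiv.measurable _))]
  refine lintegral_congr fun x => lintegral_congr fun a => ?_
  have : (MeasurableEquiv.piFinSuccAbove (fun _ : Fin (n+1) => ℝ) 0).symm (a, x)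
      = (Fin.cons a x : Fin (n+1) → ℝ) := by
    simp [MeasurableEquiv.piFinSuccAbove, Fin.insertNthEquiv, Fin.insertNth_zero']
  rw [this]

lemma meas_pair {k : ℕ} {β : Type*} [MeasurableSpace β] {H : ℝ → ℝ → β}
    (hH : Measurable (Function.uncurry H)) (i j : Fin k) :
    Measurable (fun x : Fin k → ℝ => H (x i) (x j)) := by
  have h : Measurable (fun x : Fin k → ℝ => (x i, x j)) := by fun_prop
  exact hH.comp h

lemma meas_left {H : ℝ → ℝ → ENNReal} (hH : Measurable (Function.uncurry H)) (v : ℝ) :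
    Measurable (fun a => H a v) := by
  have h : Measurable (fun a : ℝ => (a, v)) := by fun_prop
  exact hH.comp h

lemma path_bound (ν : Measure ℝ) [IsFiniteMeasure ν] (F : ℝ → ℝ → ENNReal)
    (hF : Measurable (Function.uncurry F)) (C : ENNReal) (hC : C ≠ ⊤)
    (hb : ∀ v, ∫⁻ a, F a v ∂ν ≤ C) (n : ℕ) :
    ∫⁻ x, ∏ j : Fin n, F (x j.castSucc) (x j.succ) ∂(Measure.pi fun _ : Fin (n+1) => ν) ≠ ⊤ := by
  induction n with
  | zero => simp
  | succ n ih =>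
    have hm : ∀ k : ℕ, Measurable (fun x : Fin (k+1) → ℝ => ∏ j : Fin k, F (x j.castSucc) (x j.succ)) := by
      intro k
      refine Finset.measurable_prod _ fun j _ => ?_
      exact meas_pair hF _ _
    rw [lint_split ν _ (hm _)]
    refine ne_top_of_le_ne_top (ENNReal.mul_ne_top hC ih) ?_
    rw [← lintegral_const_mul _ (hm n)]
    refine lintegral_mono fun x => ?_
    have : ∀ a : ℝ, (∏ j : Fin (n+1), F ((Fin.cons a x : Fin (n+2) → ℝ) j.castSucc) ((Fin.cons a x : Fin (n+2) → ℝ) j.succ))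
        = F a (x 0) * ∏ j : Fin n, F (x j.castSucc) (x j.succ) := by
      intro a
      rw [Fin.prod_univ_succ]
      simp
    simp_rw [this]
    rw [lintegral_mul_const _ (meas_left hF _)]
    gcongr
    exact hb _

lemma cycle_bound (ν : Measure ℝ) [IsFiniteMeasure ν] (F F2 : ℝ → ℝ → ENNReal)
    (hF : Measurable (Function.uncurry F)) (hF2 : Measurable (Function.uncurry F2))
    (hsymm : ∀ u v, F u v = F v u)
    (hFF : ∀ u v w, F u v * F u w ≤ F2 u v + F2 u w)
    (C : ENNReal) (hC : C ≠ ⊤)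
    (hb : ∀ v, ∫⁻ a, F a v ∂ν ≤ C) (hb2 : ∀ v, ∫⁻ a, F2 a v ∂ν ≤ C) (n : ℕ) :
    ∫⁻ x, ∏ j : Fin (n+2), F (x j) (x ⟨((j : ℕ) + 1) % (n+2), Nat.mod_lt _ (by omega)⟩)
      ∂(Measure.pi fun _ : Fin (n+2) => ν) ≠ ⊤ := by
  have hm : Measurable (fun x : Fin (n+1) → ℝ => ∏ j : Fin n, F (x j.castSucc) (x j.succ)) := by
    refine Finset.measurable_prod _ fun j _ => ?_
    exact meas_pair hF _ _
  have hm2 : Measurable (fun x : Fin (n+2) → ℝ => ∏ j : Fin (n+2),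
      F (x j) (x ⟨((j : ℕ) + 1) % (n+2), Nat.mod_lt _ (by omega)⟩)) := by
    refine Finset.measurable_prod _ fun j _ => ?_
    exact meas_pair hF _ _
  rw [lint_split ν _ hm2]
  refine ne_top_of_le_ne_top (ENNReal.mul_ne_top (ENNReal.add_ne_top.2 ⟨hC, hC⟩)
    (path_bound ν F hF C hC hb n)) ?_
  rw [← lintegral_const_mul _ hm]
  refine lintegral_mono fun x => ?_
  have : ∀ a : ℝ, (∏ j : Fin (n+2), F ((Fin.cons a x : Fin (n+2) → ℝ) j)
      ((Fin.cons a x : Fin (n+2) → ℝ) ⟨((j : ℕ) + 1) % (n+2), Nat.mod_lt _ (by omega)⟩))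
        ≤ (F2 a (x 0) + F2 a (x (Fin.last n))) * ∏ j : Fin n, F (x j.castSucc) (x j.succ) := by
    intro a
    have h0 : (⟨(((0 : Fin (n+2)) : ℕ) + 1) % (n+2), Nat.mod_lt _ (by omega)⟩ : Fin (n+2))
        = Fin.succ 0 := by
      ext; simp
    have hl : (⟨(((Fin.last n).succ : ℕ) + 1) % (n+2), Nat.mod_lt _ (by omega)⟩ : Fin (n+2))
        = 0 := by
      ext; simp
    have hj : ∀ j : Fin n, (⟨((j.castSucc.succ : ℕ) + 1) % (n+2), Nat.mod_lt _ (by omega)⟩ : Fin (n+2))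
        = j.succ.succ := by
      intro j
      ext
      have := j.isLt
      simp only [Fin.val_succ, Fin.val_castSucc]
      exact Nat.mod_eq_of_lt (by omega)
    rw [Fin.prod_univ_succ, Fin.prod_univ_castSucc, h0, hl]
    simp_rw [hj]
    simp only [Fin.cons_zero, Fin.cons_succ]
    calc _ = (F a (x 0) * F a (x (Fin.last n))) * ∏ j : Fin n, F (x j.castSucc) (x j.succ) := by
            rw [hsymm (x (Fin.last n)) a]; ring
      _ ≤ _ := by gcongr; exact hFF _ _ _
  refine (lintegral_mono this).trans ?_
  have hma : ∀ v, Measurable (fun a => F2 a v) := meas_left hF2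
  rw [lintegral_mul_const _ (by fun_prop), lintegral_add_left (hma _)]
  gcongr
  · exact hb2 _
  · exact hb2 _

lemma kernel_bound (t p : ℝ) (hp : -1 < p) (hp0 : p ≤ 0) :
    ∃ C : ENNReal, C ≠ ⊤ ∧ ∀ v, ∫⁻ a in Ioc 0 t, ENNReal.ofReal (|a - v| ^ p) ≤ C := by
  have h1 : IntegrableOn (fun w : ℝ => |w| ^ p) (Ioc 0 1) := by
    have := (intervalIntegral.intervalIntegrable_rpow' (a := 0) (b := 1) hp).1
    refine this.congr_fun (fun x hx => ?_) measurableSet_Ioc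
    simp only [abs_of_pos hx.1]
  have h1' : IntervalIntegrable (fun w : ℝ => |w| ^ p) volume 0 1 :=
    (intervalIntegrable_iff_integrableOn_Ioc_of_le zero_le_one).2 h1
  have h2 : IntervalIntegrable (fun w : ℝ => |w| ^ p) volume (-1) 0 := by
    have := (IntervalIntegrable.iff_comp_neg (f := fun w : ℝ => |w| ^ p) (a := 0) (b := 1)).1 h1'
    simpa using this.symm
  have h3 : IntegrableOn (fun w : ℝ => |w| ^ p) (Ioc (-1) 1) :=
    (intervalIntegrable_iff_integrableOn_Ioc_of_le (by norm_num)).1 (h2.trans h1')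
  have h4 : ∫⁻ w in Ioc (-1 : ℝ) 1, ENNReal.ofReal (|w| ^ p) ≠ ⊤ := by
    have := h3.2
    rw [hasFiniteIntegral_iff_ofReal (Filter.Eventually.of_forall fun x => by positivity)] at this
    exact this.ne
  refine ⟨volume (Ioc 0 t) + ∫⁻ w in Ioc (-1 : ℝ) 1, ENNReal.ofReal (|w| ^ p),
    ENNReal.add_ne_top.2 ⟨by simp, h4⟩, fun v => ?_⟩
  set g : ℝ → ENNReal := (Ioc (-1 : ℝ) 1).indicator (fun w => ENNReal.ofReal (|w| ^ p)) with hg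
  have hgm : Measurable g := by
    refine Measurable.indicator ?_ measurableSet_Ioc
    fun_prop
  have hle : ∀ a, ENNReal.ofReal (|a - v| ^ p) ≤ 1 + g (a - v) := by
    intro a
    by_cases h : a - v ∈ Ioc (-1 : ℝ) 1
    · simp only [hg, indicator_of_mem h]
      exact le_add_self
    · simp only [hg, indicator_of_notMem h, add_zero]
      rw [ENNReal.ofReal_le_one]
      apply Real.rpow_le_one_of_one_le_of_nonpos _ hp0
      by_contra hc
      rw [not_le, abs_lt] at hc
      exact h ⟨hc.1, hc.2.le⟩
  refine (lintegral_mono hle).trans ?_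
  rw [lintegral_add_left measurable_const]
  refine add_le_add (by simp) ?_
  refine (setLIntegral_le_lintegral _ _).trans ?_
  rw [lintegral_sub_right_eq_self g v, hg, lintegral_indicator measurableSet_Ioc]

lemma beta_integrable (d : ℝ) (hd₁ : 1/4 < d) (hd₂ : d < 1/2) :
    IntegrableOn (fun y : ℝ => y ^ (d - 1) * (1 + y) ^ (d - 1)) (Ioi 0) := by
  have hm : Measurable (fun y : ℝ => y ^ (d - 1) * (1 + y) ^ (d - 1)) := by fun_prop
  rw [← Ioc_union_Ioi_eq_Ioi (zero_le_one (α := ℝ))]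
  refine IntegrableOn.union ?_ ?_
  · have := (intervalIntegral.intervalIntegrable_rpow' (a := 0) (b := 1) (r := d - 1) (by linarith)).1
    refine Integrable.mono' this hm.aestronglyMeasurable ?_
    refine (ae_restrict_iff' measurableSet_Ioc).2 (Filter.Eventually.of_forall fun y hy => ?_)
    have hy0 := hy.1
    rw [Real.norm_of_nonneg (by positivity)]
    have : (1 + y) ^ (d - 1) ≤ 1 := Real.rpow_le_one_of_one_le_of_nonpos (by linarith) (by linarith)
    exact mul_le_of_le_one_right (by positivity) this
  · have := integrableOn_Ioi_rpow_of_lt (a := 2 * d - 2) (c := 1) (by linarith) one_pos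
    refine Integrable.mono' this hm.aestronglyMeasurable ?_
    refine (ae_restrict_iff' measurableSet_Ioi).2 (Filter.Eventually.of_forall fun y hy => ?_)
    have hy0 : 0 < y := one_pos.trans hy
    rw [Real.norm_of_nonneg (by positivity)]
    have h1 : (1 + y) ^ (d - 1) ≤ y ^ (d - 1) :=
      Real.rpow_le_rpow_of_nonpos hy0 (by linarith) (by linarith)
    calc _ ≤ y ^ (d - 1) * y ^ (d - 1) := by gcongr
      _ = _ := by rw [← Real.rpow_add hy0]; ring_nf

lemma tempG_nonneg (d lam u v : ℝ) : 0 ≤ tempG d lam u v := by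
  unfold tempG
  refine mul_nonneg (by positivity) (setIntegral_nonneg measurableSet_Ioi fun y hy => ?_)
  have : 0 < y := hy
  positivity

lemma tempG_le (d : ℝ) (hd₁ : 1/4 < d) (hd₂ : d < 1/2) (lam u v : ℝ) (hl : 0 < lam) :
    tempG d lam u v ≤ |u - v| ^ (2 * d - 1) *
      ∫ y in Set.Ioi (0 : ℝ), y ^ (d - 1) * (1 + y) ^ (d - 1) := by
  unfold tempG
  have h1 : Real.exp (-lam * |u - v|) ≤ 1 := by
    rw [Real.exp_le_one_iff]
    have := mul_nonneg hl.le (abs_nonneg (u - v))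
    linarith
  have h2 : ∫ y in Set.Ioi (0 : ℝ), y ^ (d - 1) * (1 + y) ^ (d - 1) * Real.exp (-2 * lam * |u - v| * y)
      ≤ ∫ y in Set.Ioi (0 : ℝ), y ^ (d - 1) * (1 + y) ^ (d - 1) := by
    refine integral_mono_of_nonneg ?_ (beta_integrable d hd₁ hd₂) ?_
    · refine (ae_restrict_iff' measurableSet_Ioi).2 (Filter.Eventually.of_forall fun y hy => ?_)
      have : 0 < y := hy
      simp only [Pi.zero_apply]
      positivity
    · refine (ae_restrict_iff' measurableSet_Ioi).2 (Filter.Eventually.of_forall fun y hy => ?_)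
      have hy0 : 0 < y := hy
      refine mul_le_of_le_one_right (by positivity) ?_
      rw [Real.exp_le_one_iff]
      have := mul_nonneg (mul_nonneg hl.le (abs_nonneg (u - v))) hy0.le
      nlinarith
  have h3 : 0 ≤ ∫ y in Set.Ioi (0 : ℝ), y ^ (d - 1) * (1 + y) ^ (d - 1) * Real.exp (-2 * lam * |u - v| * y) := by
    refine setIntegral_nonneg measurableSet_Ioi fun y hy => ?_
    have : 0 < y := hy
    positivity
  refine mul_le_mul ?_ h2 h3 (by positivity)
  exact mul_le_of_le_one_left (by positivity) h1

lemma tempG_tendsto (d : ℝ) (hd₁ : 1/4 < d) (hd₂ : d < 1/2) (u v : ℝ) :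
    Filter.Tendsto (fun lam => tempG d lam u v) (nhdsWithin 0 (Ioi 0))
      (nhds (|u - v| ^ (2 * d - 1) *
      ∫ y in Set.Ioi (0 : ℝ), y ^ (d - 1) * (1 + y) ^ (d - 1))) := by
  unfold tempG
  refine Filter.Tendsto.mul ?_ ?_
  · have : Filter.Tendsto (fun lam : ℝ => Real.exp (-lam * |u - v|) * |u - v| ^ (2 * d - 1))
        (nhds 0) (nhds (Real.exp (-0 * |u - v|) * |u - v| ^ (2 * d - 1))) :=
      Continuous.tendsto (by fun_prop) 0
    simpa using this.mono_left nhdsWithin_le_nhds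
  · refine tendsto_integral_filter_of_dominated_convergence
      (fun y : ℝ => y ^ (d - 1) * (1 + y) ^ (d - 1)) ?_ ?_ (beta_integrable d hd₁ hd₂) ?_
    · exact Filter.Eventually.of_forall fun lam => Measurable.aestronglyMeasurable (by fun_prop)
    · filter_upwards [self_mem_nhdsWithin] with lam hl
      refine (ae_restrict_iff' measurableSet_Ioi).2 (Filter.Eventually.of_forall fun y hy => ?_)
      have hy0 : 0 < y := hy
      have hl0 : 0 < lam := hl
      rw [Real.norm_of_nonneg (by positivity)]
      refine mul_le_of_le_one_right (by positivity) ?_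
      rw [Real.exp_le_one_iff]
      have := mul_nonneg (mul_nonneg hl0.le (abs_nonneg (u - v))) hy0.le
      nlinarith
    · refine Filter.Eventually.of_forall fun y => ?_
      have : Filter.Tendsto (fun lam : ℝ => y ^ (d - 1) * (1 + y) ^ (d - 1) * Real.exp (-2 * lam * |u - v| * y))
        (nhds 0) (nhds (y ^ (d - 1) * (1 + y) ^ (d - 1) * Real.exp (-2 * 0 * |u - v| * y))) :=
        Continuous.tendsto (by fun_prop) 0
      simpa using this.mono_left nhdsWithin_le_nhds

lemma tempG_meas (d lam : ℝ) : Measurable (fun p : ℝ × ℝ => tempG d lam p.1 p.2) := by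
  unfold tempG
  refine Measurable.mul (by fun_prop) ?_
  have : StronglyMeasurable (fun q : (ℝ × ℝ) × ℝ =>
      q.2 ^ (d - 1) * (1 + q.2) ^ (d - 1) * Real.exp (-2 * lam * |q.1.1 - q.1.2| * q.2)) :=
    Measurable.stronglyMeasurable (by fun_prop)
  exact (this.integral_prod_right' (ν := volume.restrict (Ioi 0))).measurable

lemma cyc_integrable (d : ℝ) (hd₁ : 1/4 < d) (hd₂ : d < 1/2)
    (t : ℝ) (m : ℕ) (hm : 2 ≤ m)
    (hlt : ∀ j : Fin m, ((j : ℕ) + 1) % m < m) :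
    IntegrableOn (fun s : Fin m → ℝ => ∏ j : Fin m,
        |s j - s ⟨((j : ℕ) + 1) % m, hlt j⟩| ^ (2 * d - 1))
      (Set.univ.pi (fun _ : Fin m => Set.Ioc (0 : ℝ) t)) := by
  obtain ⟨n, rfl⟩ : ∃ n, m = n + 2 := ⟨m - 2, by omega⟩
  obtain ⟨C1, hC1, hb1⟩ := kernel_bound t (2 * d - 1) (by linarith) (by linarith)
  obtain ⟨C2, hC2, hb2⟩ := kernel_bound t ((2 * d - 1) * (2 : ℕ)) (by push_cast; linarith) (by push_cast; linarith)
  have key := cycle_bound (volume.restrict (Ioc 0 t))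
    (fun u v => ENNReal.ofReal (|u - v| ^ (2 * d - 1)))
    (fun u v => ENNReal.ofReal (|u - v| ^ ((2 * d - 1) * (2 : ℕ))))
    (by simp only [Function.uncurry_def]; fun_prop) (by simp only [Function.uncurry_def]; fun_prop)
    (fun u v => by rw [abs_sub_comm])
    (fun u v w => by
      rw [← ENNReal.ofReal_mul (by positivity), ← ENNReal.ofReal_add (by positivity) (by positivity)]
      apply ENNReal.ofReal_le_ofReal
      rw [Real.rpow_mul_natCast (abs_nonneg _), Real.rpow_mul_natCast (abs_nonneg _)]
      nlinarith [sq_nonneg (|u - v| ^ (2 * d - 1) - |u - w| ^ (2 * d - 1)),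
        sq_nonneg (|u - v| ^ (2 * d - 1)), sq_nonneg (|u - w| ^ (2 * d - 1))])
    (C1 + C2) (ENNReal.add_ne_top.2 ⟨hC1, hC2⟩)
    (fun v => (hb1 v).trans le_self_add) (fun v => (hb2 v).trans le_add_self) n
  rw [← Measure.restrict_pi_pi, ← volume_pi] at key
  refine ⟨Measurable.aestronglyMeasurable (by fun_prop), ?_⟩
  rw [hasFiniteIntegral_iff_ofReal (Filter.Eventually.of_forall fun x => by
    simp only [Pi.zero_apply]; positivity)]
  simp_rw [ENNReal.ofReal_prod_of_nonneg (fun i _ => Real.rpow_nonneg (abs_nonneg _) _)]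
  exact key.lt_top

theorem stmt15 (d : ℝ) (hd₁ : 1/4 < d) (hd₂ : d < 1/2)
    (t : ℝ) (ht : 0 < t) (m : ℕ) (hm : 2 ≤ m) :
    -- the limit is finite
    IntegrableOn (fun s : Fin m → ℝ => ∏ j : Fin m,
        |s j - s ⟨((j : ℕ) + 1) % m, Nat.mod_lt _ (by omega)⟩| ^ (2 * d - 1))
      (Set.univ.pi (fun _ : Fin m => Set.Ioc (0 : ℝ) t)) ∧
    -- convergence of the cumulant integrals as λ → 0⁺
    Filter.Tendsto
      (fun lam : ℝ =>
        ∫ s in Set.univ.pi (fun _ : Fin m => Set.Ioc (0 : ℝ) t), ∏ j : Fin m,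
          tempG d lam (s j) (s ⟨((j : ℕ) + 1) % m, Nat.mod_lt _ (by omega)⟩))
      (nhdsWithin 0 (Set.Ioi 0))
      (nhds ((∫ y in Set.Ioi (0 : ℝ), y ^ (d - 1) * (1 + y) ^ (d - 1)) ^ m *
        ∫ s in Set.univ.pi (fun _ : Fin m => Set.Ioc (0 : ℝ) t), ∏ j : Fin m,
          |s j - s ⟨((j : ℕ) + 1) % m, Nat.mod_lt _ (by omega)⟩| ^ (2 * d - 1))) := by
  refine ⟨cyc_integrable d hd₁ hd₂ t m hm (fun _ => Nat.mod_lt _ (by omega)), ?_⟩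
  have hint := cyc_integrable d hd₁ hd₂ t m hm (fun _ => Nat.mod_lt _ (by omega))
  set B := ∫ y in Set.Ioi (0 : ℝ), y ^ (d - 1) * (1 + y) ^ (d - 1) with hB
  rw [← integral_const_mul]
  have hprod : ∀ s : Fin m → ℝ, (B ^ m * ∏ j : Fin m,
      |s j - s ⟨((j : ℕ) + 1) % m, Nat.mod_lt _ (by omega)⟩| ^ (2 * d - 1)) =
      ∏ j : Fin m, (|s j - s ⟨((j : ℕ) + 1) % m, Nat.mod_lt _ (by omega)⟩| ^ (2 * d - 1) * B) := by
    intro s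
    rw [Finset.prod_mul_distrib, Finset.prod_const, Finset.card_univ, Fintype.card_fin, mul_comm]
  refine tendsto_integral_filter_of_dominated_convergence _ ?_ ?_ (hint.const_mul (B ^ m)) ?_
  · refine Filter.Eventually.of_forall fun lam => Measurable.aestronglyMeasurable ?_
    refine Finset.measurable_prod _ fun j _ => ?_
    exact meas_pair (H := tempG d lam) (tempG_meas d lam) _ _
  · filter_upwards [self_mem_nhdsWithin] with lam hl
    refine Filter.Eventually.of_forall fun s => ?_
    rw [hprod, Real.norm_of_nonneg (Finset.prod_nonneg fun j _ => tempG_nonneg _ _ _ _)]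
    exact Finset.prod_le_prod (fun j _ => tempG_nonneg _ _ _ _)
      (fun j _ => tempG_le d hd₁ hd₂ lam _ _ hl)
  · refine Filter.Eventually.of_forall fun s => ?_
    rw [hprod]
    exact tendsto_finsetProd _ fun j _ => tempG_tendsto d hd₁ hd₂ _ _
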